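/- arXiv:1001.0436 — 2 statements merged into one kernel-verified Lean document; each statement's English description precedes it below -/
import Mathlib

section
/- Let A be a deterministic mechanism for maximum weight bipartite matching with 2 jobs and 2 machines in the private graph model: A assigns to each value function v : Fin 2 × Fin 2 → ℝ with v ≥ 0 and each edge set E ⊆ Fin 2 × Fin 2 a matching A(v,E) ⊆ E. Suppose A is truthful: for every v ≥ 0, every edge set E, every job i, and every set E'_i of pairs with first coordinate i, letting E' = (E \ E_i) ∪ E'_i, one has ∑_{e ∈ A(v,E) ∩ E_i} v(e) ≥ ∑_{e ∈ A(v,E') ∩ E_i} v(e). Then for every real α < 2 there exist v ≥ 0 and an edge set E such that α · ∑_{e ∈ A(v,E)} v(e) < max over all matchings M ⊆ E of ∑_{e ∈ M} v(e). That is, no deterministic truthful mechanism without money for maximum weight bipartite matching has approximation ratio better than 2. -/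
/-- A matching: any two distinct elements differ in both coordinates. -/
def IsMatching {n m : ℕ} (M : Finset (Fin n × Fin m)) : Prop :=
  ∀ e ∈ M, ∀ e' ∈ M, e ≠ e' → e.1 ≠ e'.1 ∧ e.2 ≠ e'.2

/-! Let every job value machine `k` at `1 + ε` and all others at `1`, and take the complete graph
on jobs `a, b` and machines `k, l`. A mechanism with ratio `2 - ε` must output two edges whenever
two disjoint edges are available, since a single edge is worth at most `1 + ε` and
`(2 - ε) * (1 + ε) < 2 + ε`. So some job, say `a`, gets `l`. If `a` hides its edge to `l`, the
edges `(a, k)` and `(b, l)` are still available, so two edges are output again and now `a` gets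
`k`, gaining `ε`: the mechanism is not truthful. -/

section Matching

variable {n m : ℕ} {M E : Finset (Fin n × Fin m)}

/-- The edges `E_i` of the edge set `E` at job `i`, which are the private information of `i`. -/
def jobEdges (E : Finset (Fin n × Fin m)) (i : Fin n) : Finset (Fin n × Fin m) :=
  E.filter fun e => e.1 = i

theorem mem_jobEdges {i : Fin n} {e : Fin n × Fin m} : e ∈ jobEdges E i ↔ e ∈ E ∧ e.1 = i :=
  Finset.mem_filter

theorem IsMatching.injOn_fst (hM : IsMatching M) : Set.InjOn Prod.fst (M : Set (Fin n × Fin m)) :=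
  fun e he e' he' h => by_contra fun hne => (hM e he e' he' hne).1 h

theorem IsMatching.injOn_snd (hM : IsMatching M) : Set.InjOn Prod.snd (M : Set (Fin n × Fin m)) :=
  fun e he e' he' h => by_contra fun hne => (hM e he e' he' hne).2 h

theorem isMatching_pair {i j : Fin n} {k l : Fin m} (hij : i ≠ j) (hkl : k ≠ l) :
    IsMatching {(i, k), (j, l)} := by
  simp [IsMatching, hij, hij.symm, hkl, hkl.symm]

theorem IsMatching.inter_jobEdges_eq_singleton (hM : IsMatching M) (hME : M ⊆ E)
    {e : Fin n × Fin m} (he : e ∈ M) : M ∩ jobEdges E e.1 = {e} := by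
  ext e'
  simp only [Finset.mem_inter, mem_jobEdges, Finset.mem_singleton]
  constructor
  · rintro ⟨he', -, h⟩
    exact hM.injOn_fst he' he h
  · rintro rfl
    exact ⟨he, hME he, rfl⟩

theorem IsMatching.exists_mem_of_job (hM : IsMatching M) {s : Finset (Fin n)} {t : Finset (Fin m)}
    (hMst : M ⊆ s ×ˢ t) (hcard : s.card ≤ M.card) {i : Fin n} (hi : i ∈ s) :
    ∃ k ∈ t, (i, k) ∈ M := by
  have hmaps : Set.MapsTo Prod.fst (M : Set (Fin n × Fin m)) s :=
    fun e he => (Finset.mem_product.1 (hMst he)).1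
  obtain ⟨e, he, rfl⟩ := Finset.surjOn_of_injOn_of_card_le _ hmaps hM.injOn_fst hcard hi
  exact ⟨e.2, (Finset.mem_product.1 (hMst he)).2, he⟩

theorem IsMatching.exists_mem_of_machine (hM : IsMatching M) {s : Finset (Fin n)}
    {t : Finset (Fin m)} (hMst : M ⊆ s ×ˢ t) (hcard : t.card ≤ M.card) {k : Fin m} (hk : k ∈ t) :
    ∃ i ∈ s, (i, k) ∈ M := by
  have hmaps : Set.MapsTo Prod.snd (M : Set (Fin n × Fin m)) t :=
    fun e he => (Finset.mem_product.1 (hMst he)).2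
  obtain ⟨e, he, rfl⟩ := Finset.surjOn_of_injOn_of_card_le _ hmaps hM.injOn_snd hcard hk
  exact ⟨e.1, (Finset.mem_product.1 (hMst he)).1, he⟩

end Matching

section Truthful

variable {n m : ℕ} {R : Type*} [AddCommMonoid R] [PartialOrder R]

/-- Truthfulness, at the public values `v`, of a mechanism `A` sending each reported edge set to a
set of edges: when the true edge set is `E`, job `i` cannot gain by reporting `F` instead of
`jobEdges E i`. Only edges that really exist contribute to the utility of `i`. -/
def IsTruthful (v : Fin n × Fin m → R) (A : Finset (Fin n × Fin m) → Finset (Fin n × Fin m)) :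
    Prop :=
  ∀ (E F : Finset (Fin n × Fin m)) (i : Fin n), (∀ e ∈ F, e.1 = i) →
    ∑ e ∈ A ((E \ jobEdges E i) ∪ F) ∩ jobEdges E i, v e ≤ ∑ e ∈ A E ∩ jobEdges E i, v e

variable [IsOrderedAddMonoid R] {v : Fin n × Fin m → R}
  {A : Finset (Fin n × Fin m) → Finset (Fin n × Fin m)}

theorem IsTruthful.value_le_of_mem (hT : IsTruthful v A) (hv : ∀ e, 0 ≤ v e)
    {E F : Finset (Fin n × Fin m)} (hM : IsMatching (A E)) (hAE : A E ⊆ E)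
    {i : Fin n} {k l : Fin m} (hF : ∀ e ∈ F, e.1 = i) (hl : (i, l) ∈ A E) (hkE : (i, k) ∈ E)
    (hk : (i, k) ∈ A ((E \ jobEdges E i) ∪ F)) : v (i, k) ≤ v (i, l) :=
  calc
    v (i, k) ≤ ∑ e ∈ A ((E \ jobEdges E i) ∪ F) ∩ jobEdges E i, v e :=
      Finset.single_le_sum (fun e _ => hv e)
        (Finset.mem_inter.2 ⟨hk, mem_jobEdges.2 ⟨hkE, rfl⟩⟩)
    _ ≤ ∑ e ∈ A E ∩ jobEdges E i, v e := hT E F i hF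
    _ = v (i, l) := by
      rw [hM.inter_jobEdges_eq_singleton hAE hl, Finset.sum_singleton]

theorem IsTruthful.value_le_of_mem_square (hT : IsTruthful v A) (hv : ∀ e, 0 ≤ v e)
    (hA : ∀ E, IsMatching (A E) ∧ A E ⊆ E) {a b : Fin n} {k l : Fin m} (hab : a ≠ b)
    (hcard : ∀ E, {(a, k), (b, l)} ⊆ E → 1 < (A E).card)
    (hl : (a, l) ∈ A ({a, b} ×ˢ {k, l})) : v (a, k) ≤ v (a, l) := by
  set E : Finset (Fin n × Fin m) := {a, b} ×ˢ {k, l} with hE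
  set E' : Finset (Fin n × Fin m) := (E \ jobEdges E a) ∪ {(a, k)} with hE'
  have hE'E : E' ⊆ E :=
    Finset.union_subset Finset.sdiff_subset (by simp [hE])
  have hpair : {(a, k), (b, l)} ⊆ E' := by
    simp [Finset.insert_subset_iff, hE', hE, mem_jobEdges, hab.symm]
  obtain ⟨k', -, hk'⟩ : ∃ k' ∈ ({k, l} : Finset (Fin m)), (a, k') ∈ A E' :=
    (hA E').1.exists_mem_of_job ((hA E').2.trans hE'E)
      (Finset.card_le_two.trans (hcard E' hpair)) (Finset.mem_insert_self a {b})
  have hk'_eq : k' = k := by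
    have hmem : (a, k') ∈ E' := (hA E').2 hk'
    simpa [hE', mem_jobEdges] using hmem
  subst hk'_eq
  exact hT.value_le_of_mem hv (hA E).1 (hA E).2 (by simp) hl (by simp [hE]) hk'

end Truthful

section BiasedValue

variable {n m : ℕ} {R : Type*} [AddCommMonoidWithOne R]

/-- The values of the lower-bound instance: every job values machine `k` at `1 + ε` and every
other machine at `1`. -/
def biasedValue (k : Fin m) (ε : R) (e : Fin n × Fin m) : R :=
  if e.2 = k then 1 + ε else 1

theorem sum_biasedValue_pair {i j : Fin n} {k l : Fin m} (hij : i ≠ j) (hkl : k ≠ l) (ε : R) :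
    ∑ e ∈ {(i, k), (j, l)}, biasedValue k ε e = 2 + ε := by
  rw [Finset.sum_pair (by simp [hij])]
  simp only [biasedValue, if_true, hkl.symm, if_false]
  rw [add_right_comm, one_add_one_eq_two]

end BiasedValue

section LowerBound

variable {n m : ℕ} {R : Type*} [CommRing R] [LinearOrder R] [IsStrictOrderedRing R]

theorem one_lt_card_of_le_mul_sum {ι : Type*} {v : ι → R} {M : Finset ι} {ε : R} (hε : 0 < ε)
    (hv : ∀ e, 0 ≤ v e) (hv' : ∀ e, v e ≤ 1 + ε) (h : 2 + ε ≤ (2 - ε) * ∑ e ∈ M, v e) :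
    1 < M.card := by
  by_contra! hcard
  have hsum_nonneg : 0 ≤ ∑ e ∈ M, v e := Finset.sum_nonneg fun e _ => hv e
  have hsum_le : ∑ e ∈ M, v e ≤ 1 + ε :=
    calc
      ∑ e ∈ M, v e ≤ M.card • (1 + ε) := Finset.sum_le_card_nsmul M v _ fun e _ => hv' e
      _ ≤ 1 • (1 + ε) := nsmul_le_nsmul_left (by linarith) hcard
      _ = 1 + ε := one_nsmul _
  rcases le_total (2 - ε) 0 with hneg | hpos
  · linarith [mul_nonpos_of_nonpos_of_nonneg hneg hsum_nonneg]
  · linarith [mul_le_mul_of_nonneg_left hsum_le hpos, mul_pos hε hε]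

theorem biasedValue_nonneg (k : Fin m) {ε : R} (hε : 0 ≤ ε) (e : Fin n × Fin m) :
    0 ≤ biasedValue k ε e := by
  unfold biasedValue; split_ifs <;> linarith

theorem biasedValue_le (k : Fin m) {ε : R} (hε : 0 ≤ ε) (e : Fin n × Fin m) :
    biasedValue k ε e ≤ 1 + ε := by
  unfold biasedValue; split_ifs <;> linarith

theorem IsTruthful.exists_mul_sum_lt {i j : Fin n} {k l : Fin m} (hij : i ≠ j) (hkl : k ≠ l)
    {ε : R} (hε : 0 < ε) {A : Finset (Fin n × Fin m) → Finset (Fin n × Fin m)}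
    (hA : ∀ E, IsMatching (A E) ∧ A E ⊆ E) (hT : IsTruthful (biasedValue k ε) A) :
    ∃ E M, IsMatching M ∧ M ⊆ E ∧
      (2 - ε) * ∑ e ∈ A E, biasedValue k ε e < ∑ e ∈ M, biasedValue k ε e := by
  by_contra! happrox
  have hcard : ∀ {a b : Fin n}, a ≠ b → ∀ E, {(a, k), (b, l)} ⊆ E → 1 < (A E).card := by
    intro a b hab E hE
    refine one_lt_card_of_le_mul_sum hε (biasedValue_nonneg k hε.le) (biasedValue_le k hε.le) ?_
    exact (sum_biasedValue_pair hab hkl ε).symm.trans_le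
      (happrox E _ (isMatching_pair hab hkl) hE)
  have hnot_mem : ∀ {a b : Fin n}, a ≠ b → (a, l) ∉ A ({a, b} ×ˢ {k, l}) := by
    intro a b hab hl
    have hle := hT.value_le_of_mem_square (biasedValue_nonneg k hε.le) hA hab (hcard hab) hl
    simp only [biasedValue, if_true, hkl.symm, if_false] at hle
    linarith
  have htwo : 1 < (A ({i, j} ×ˢ {k, l})).card :=
    hcard hij _ (by simp [Finset.insert_subset_iff])
  obtain ⟨a, ha, hal⟩ : ∃ a ∈ ({i, j} : Finset (Fin n)), (a, l) ∈ A ({i, j} ×ˢ {k, l}) :=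
    (hA _).1.exists_mem_of_machine (hA _).2 (Finset.card_le_two.trans htwo) (by simp)
  rcases Finset.mem_insert.1 ha with rfl | ha
  · exact hnot_mem hij hal
  · obtain rfl := Finset.mem_singleton.1 ha
    exact hnot_mem hij.symm (Finset.pair_comm i a ▸ hal)

theorem stmt1_general (hn : 2 ≤ n) (hm : 2 ≤ m) {α : R} (hα : α < 2) :
    ∃ v : Fin n × Fin m → R, (∀ e, 0 ≤ v e) ∧
      ∀ A : Finset (Fin n × Fin m) → Finset (Fin n × Fin m),
        (∀ E, IsMatching (A E) ∧ A E ⊆ E) → IsTruthful v A →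
          ∃ E M, IsMatching M ∧ M ⊆ E ∧ α * ∑ e ∈ A E, v e < ∑ e ∈ M, v e := by
  have := Fin.nontrivial_iff_two_le.2 hn
  have := Fin.nontrivial_iff_two_le.2 hm
  obtain ⟨i, j, hij⟩ := exists_pair_ne (Fin n)
  obtain ⟨k, l, hkl⟩ := exists_pair_ne (Fin m)
  obtain ⟨ε, hε, rfl⟩ : ∃ ε > 0, α = 2 - ε := ⟨2 - α, sub_pos.2 hα, (sub_sub_cancel 2 α).symm⟩
  exact ⟨biasedValue k ε, biasedValue_nonneg k hε.le,
    fun A hA hT => hT.exists_mul_sum_lt hij hkl hε hA⟩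

end LowerBound

/-- No deterministic truthful mechanism without money for maximum weight bipartite
matching (with 2 jobs and 2 machines) has approximation ratio better than 2. -/
theorem stmt1
    (A : (Fin 2 × Fin 2 → ℝ) → Finset (Fin 2 × Fin 2) → Finset (Fin 2 × Fin 2))
    (hA : ∀ v E, (∀ e, 0 ≤ v e) → IsMatching (A v E) ∧ A v E ⊆ E)
    (htruth : ∀ (v : Fin 2 × Fin 2 → ℝ), (∀ e, 0 ≤ v e) →
      ∀ (E Ei' : Finset (Fin 2 × Fin 2)) (i : Fin 2), (∀ e ∈ Ei', e.1 = i) →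
        ∑ e ∈ (A v ((E \ E.filter (fun e => e.1 = i)) ∪ Ei')) ∩ E.filter (fun e => e.1 = i), v e
          ≤ ∑ e ∈ (A v E) ∩ E.filter (fun e => e.1 = i), v e) :
    ∀ α : ℝ, α < 2 → ∃ (v : Fin 2 × Fin 2 → ℝ) (E M : Finset (Fin 2 × Fin 2)),
      (∀ e, 0 ≤ v e) ∧ IsMatching M ∧ M ⊆ E ∧
        α * ∑ e ∈ A v E, v e < ∑ e ∈ M, v e := by
  intro α hα
  obtain ⟨v, hv, h⟩ := stmt1_general le_rfl le_rfl hα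
  obtain ⟨E, M, hM⟩ := h (A v) (fun E => hA v E hv) (htruth v hv)
  exact ⟨v, E, M, hv, hM⟩
end

section
/- Fix numbers of jobs n and machines m, values v : Fin n → ℝ with v ≥ 0, machine-dependent sizes s : Fin n × Fin m → ℝ with s ≥ 0, capacities c : Fin m → ℝ with c ≥ 0, and a linear order ≺ on the set of assignments x : Fin n → Option (Fin m). Let E be an edge set, i a job, E'_i a set of pairs with first coordinate i, and E' = (E \ E_i) ∪ E'_i. Suppose x is a welfare-maximizing feasible assignment for VIGAP[E] that is ≺-least among all welfare-maximizing feasible assignments for VIGAP[E], and x' is a welfare-maximizing feasible assignment for VIGAP[E'] that is ≺-least among all welfare-maximizing feasible assignments for VIGAP[E']. If there exists a machine j with (i,j) ∈ E and x'(i) = some j, then x(i) ≠ none. That is, solving the value-invariant GAP optimally, breaking ties consistently independent of the reported edges, gives a truthful mechanism in the private graph model. -/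
/-- Feasibility of an assignment for VIGAP[E] (machine-dependent sizes). -/
def VIGAPFeasible {n m : ℕ} (s : Fin n × Fin m → ℝ) (c : Fin m → ℝ)
    (E : Finset (Fin n × Fin m)) (x : Fin n → Option (Fin m)) : Prop :=
  (∀ i j, x i = some j → (i, j) ∈ E) ∧
    ∀ j, ∑ i ∈ Finset.univ.filter (fun i => x i = some j), s (i, j) ≤ c j

/-- Welfare of an assignment in VIGAP: each assigned job contributes its value. -/
def VIGAPWelfare {n m : ℕ} (v : Fin n → ℝ) (x : Fin n → Option (Fin m)) : ℝ :=
  ∑ i ∈ Finset.univ.filter (fun i => x i ≠ none), v i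

/-!
If job `i` is left out by `x`, then `x` uses no edge of `i` and so is feasible for `E'` too, while
`x'` uses only a true edge of `i` and so is feasible for `E` too. Hence both are optimal for both
edge sets, and a tie-breaking order that ignores the edges would put each strictly before the other.
-/

/-- A maximizer of the objective `f` over the set `S` that is preferred by the tie-breaking relation
`lt` to every other maximizer: the outcome selected by a mechanism with consistent tie-breaking. -/
structure IsTieBrokenMaximizer {α β : Type*} [Preorder β] (lt : α → α → Prop) (f : α → β)
    (S : Set α) (a : α) : Prop where
  mem : a ∈ S
  isMaxOn : IsMaxOn f S a
  lt_of_eq : ∀ b ∈ S, f b = f a → b ≠ a → lt a b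

theorem IsTieBrokenMaximizer.eq_of_mem_of_mem {α β : Type*} [PartialOrder β] {lt : α → α → Prop}
    [Std.Asymm lt] {f : α → β} {S T : Set α} {a b : α} (ha : IsTieBrokenMaximizer lt f S a)
    (hb : IsTieBrokenMaximizer lt f T b) (haT : a ∈ T) (hbS : b ∈ S) : a = b := by
  have hf : f a = f b := le_antisymm (hb.isMaxOn haT) (ha.isMaxOn hbS)
  by_contra hne
  have hab : lt a b := ha.lt_of_eq b hbS hf.symm (Ne.symm hne)
  have hba : lt b a := hb.lt_of_eq a haT hf hne
  exact asymm hab hba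

theorem mem_sdiff_filter_union_iff {α : Type*} [DecidableEq α] {p : α → Prop} [DecidablePred p]
    {A B : Finset α} (hB : ∀ b ∈ B, p b) {a : α} (ha : ¬p a) :
    a ∈ (A \ A.filter p) ∪ B ↔ a ∈ A := by
  have haB : a ∉ B := fun h => ha (hB a h)
  simp [ha, haB]

section VIGAP

variable {n m : ℕ} {s : Fin n × Fin m → ℝ} {c : Fin m → ℝ} {E E' : Finset (Fin n × Fin m)}
  {i : Fin n} {x x' : Fin n → Option (Fin m)}

theorem VIGAPFeasible.of_subset_off_job (hx : VIGAPFeasible s c E x)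
    (hoff : ∀ e ∈ E, e.1 ≠ i → e ∈ E') (hi : ∀ j, x i = some j → (i, j) ∈ E') :
    VIGAPFeasible s c E' x := by
  refine ⟨fun k j hkj => ?_, hx.2⟩
  obtain rfl | hk := eq_or_ne k i
  · exact hi j hkj
  · exact hoff (k, j) (hx.1 k j hkj) hk

theorem stmt10_general {v : Fin n → ℝ}
    {lt : (Fin n → Option (Fin m)) → (Fin n → Option (Fin m)) → Prop} [Std.Asymm lt]
    (hEE' : ∀ e : Fin n × Fin m, e.1 ≠ i → (e ∈ E' ↔ e ∈ E))
    (hx : IsTieBrokenMaximizer lt (VIGAPWelfare v) {y | VIGAPFeasible s c E y} x)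
    (hx' : IsTieBrokenMaximizer lt (VIGAPWelfare v) {y | VIGAPFeasible s c E' y} x')
    (hj : ∃ j, (i, j) ∈ E ∧ x' i = some j) : x i ≠ none := by
  intro hi
  obtain ⟨j, hjE, hj⟩ := hj
  have hxE' : VIGAPFeasible s c E' x :=
    hx.mem.of_subset_off_job (fun e he hne => (hEE' e hne).2 he) (by simp [hi])
  have hx'E : VIGAPFeasible s c E x' :=
    hx'.mem.of_subset_off_job (fun e he hne => (hEE' e hne).1 he) (by simp [hj, hjE])
  have hxx' : x = x' := hx.eq_of_mem_of_mem hx' hxE' hx'E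
  simp [hxx', hj] at hi

end VIGAP

/-- Solving VIGAP optimally, breaking ties consistently via an arbitrary total
order on assignments, is truthful in the private graph model. -/
theorem stmt10 (n m : ℕ) (v : Fin n → ℝ) (s : Fin n × Fin m → ℝ) (c : Fin m → ℝ)
    (hv : ∀ i, 0 ≤ v i) (hs : ∀ p, 0 ≤ s p) (hc : ∀ j, 0 ≤ c j)
    (lt : (Fin n → Option (Fin m)) → (Fin n → Option (Fin m)) → Prop)
    (hlt : IsStrictTotalOrder (Fin n → Option (Fin m)) lt)
    (E Ei' : Finset (Fin n × Fin m)) (i : Fin n)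
    (hEi' : ∀ e ∈ Ei', e.1 = i)
    (E' : Finset (Fin n × Fin m))
    (hE' : E' = (E \ E.filter (fun e => e.1 = i)) ∪ Ei')
    (x x' : Fin n → Option (Fin m))
    (hx : VIGAPFeasible s c E x)
    (hxopt : ∀ y, VIGAPFeasible s c E y → VIGAPWelfare v y ≤ VIGAPWelfare v x)
    (hxmin : ∀ y, VIGAPFeasible s c E y → VIGAPWelfare v y = VIGAPWelfare v x → y ≠ x → lt x y)
    (hx' : VIGAPFeasible s c E' x')
    (hx'opt : ∀ y, VIGAPFeasible s c E' y → VIGAPWelfare v y ≤ VIGAPWelfare v x')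
    (hx'min : ∀ y, VIGAPFeasible s c E' y → VIGAPWelfare v y = VIGAPWelfare v x' → y ≠ x' → lt x' y)
    (hj : ∃ j, (i, j) ∈ E ∧ x' i = some j) :
    x i ≠ none := by
  subst hE'
  exact stmt10_general (fun _ => mem_sdiff_filter_union_iff hEi') ⟨hx, hxopt, hxmin⟩
    ⟨hx', hx'opt, hx'min⟩ hj
end
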